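/- Let λ ∈ ℝ, let α ∈ (0, 1], and let φ : ℝ → ℂ be a bounded measurable function with compact support satisfying the Hölder condition at λ: there is a constant C ≥ 0 with |φ(x) − φ(λ)| ≤ C·|x−λ|^α for all x ∈ ℝ. Then there exists L ∈ ℂ such that ∫_ℝ φ(x) · (x−λ) / ((x−λ)² + y²) dx tends to L as y → 0 from the right. -/

import Mathlib

open Filter Topology MeasureTheory

/-- If `φ : ℝ → ℂ` is bounded, measurable, compactly supported and satisfies a Hölder
condition at `lam` with exponent `α ∈ (0, 1]`, then the integrals
`∫ φ(x) · (x - lam) / ((x - lam)² + y²) dx` converge to some limit `L` as `y → 0⁺`. -/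
theorem conjugate_poisson_kernel_integral_converges
    (lam : ℝ) (α : ℝ) (hα : α ∈ Set.Ioc (0 : ℝ) 1)
    (φ : ℝ → ℂ) (hmeas : Measurable φ)
    (hbdd : ∃ M : ℝ, ∀ x : ℝ, ‖φ x‖ ≤ M) (hsupp : HasCompactSupport φ)
    (C : ℝ) (hC : 0 ≤ C)
    (hHolder : ∀ x : ℝ, ‖φ x - φ lam‖ ≤ C * |x - lam| ^ α) :
    ∃ L : ℂ,
      Tendsto (fun y : ℝ => ∫ x : ℝ, ((x - lam) / ((x - lam) ^ 2 + y ^ 2)) • φ x)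
        (𝓝[>] 0) (𝓝 L) := by
  obtain ⟨M, hM⟩ := hbdd
  obtain ⟨hα0, hα1⟩ := hα
  obtain ⟨R, hR0, hR⟩ : ∃ R : ℝ, 0 < R ∧ ∀ t : ℝ, R < |t| → φ (lam + t) = 0 := by
    obtain ⟨r, hr⟩ := hsupp.isCompact.isBounded.subset_closedBall lam
    refine ⟨max r 1, by positivity, fun t ht => ?_⟩
    by_contra hne
    have h1 := hr (subset_tsupport φ (Function.mem_support.mpr hne))
    rw [Metric.mem_closedBall, Real.dist_eq, add_sub_cancel_left] at h1
    exact absurd (h1.trans (le_max_left r 1)) (not_le.mpr ht)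
  set ψ : ℝ → ℂ := fun t => φ (lam + t) - φ (lam - t) with hψ
  have hψmeas : Measurable ψ := by fun_prop
  have hψb : ∀ t, ‖ψ t‖ ≤ 2 * C * |t| ^ α := by
    intro t
    have h1 := hHolder (lam + t)
    have h2 := hHolder (lam - t)
    rw [show lam + t - lam = t by ring] at h1
    rw [show lam - t - lam = -t by ring, abs_neg] at h2
    have h3 : ψ t = (φ (lam + t) - φ lam) - (φ (lam - t) - φ lam) := by simp [hψ]
    rw [h3]
    linarith [norm_sub_le (φ (lam + t) - φ lam) (φ (lam - t) - φ lam)]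
  have hψ0 : ∀ t, R < |t| → ψ t = 0 := by
    intro t ht
    have h2 := hR (-t) (by rwa [abs_neg])
    simp only [hψ, hR t ht, sub_eq_add_neg lam t, h2, sub_zero]
  set f : ℝ → ℝ := Set.indicator (Set.Ioc 0 R) (fun t => t ^ (α - 1)) with hf
  have hfi : Integrable f := by
    rw [hf, integrable_indicator_iff measurableSet_Ioc]
    have := intervalIntegral.intervalIntegrable_rpow' (a := 0) (b := R) (r := α - 1) (by linarith)
    exact (intervalIntegrable_iff_integrableOn_Ioc_of_le hR0.le).mp this
  have hfnn : ∀ t, 0 ≤ f t := fun t =>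
    Set.indicator_nonneg (fun x hx => Real.rpow_nonneg hx.1.le _) t
  have hsum : ∀ t, t ≠ 0 → |t| ≤ R → |t| ^ (α - 1) ≤ f t + f (-t) := by
    intro t ht htR
    have key : f |t| = |t| ^ (α - 1) :=
      Set.indicator_of_mem (show |t| ∈ Set.Ioc 0 R from ⟨abs_pos.mpr ht, htR⟩) _
    rw [← key]
    rcases abs_choice t with h | h <;> rw [h]
    · linarith [hfnn (-t)]
    · linarith [hfnn t]
  have hk : ∀ y t : ℝ, t ≠ 0 → |t / (t ^ 2 + y ^ 2)| ≤ |t|⁻¹ := by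
    intro y t ht
    have h0 : 0 < |t| := abs_pos.mpr ht
    have h1 : 0 < t ^ 2 + y ^ 2 := by positivity
    rw [abs_div, abs_of_pos h1, inv_eq_one_div, div_le_div_iff₀ h1 h0]
    nlinarith [abs_mul_abs_self t, sq_nonneg y]
  have hlim : Tendsto (fun y : ℝ => ∫ t : ℝ, (t / (t ^ 2 + y ^ 2)) • ψ t) (𝓝[>] 0)
      (𝓝 (∫ t : ℝ, (t / (t ^ 2 + 0 ^ 2)) • ψ t)) := by
    refine tendsto_integral_filter_of_dominated_convergence
      (fun t => 2 * C * (f t + f (-t))) ?_ ?_ ?_ ?_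
    · refine Eventually.of_forall fun y => ?_
      have : Measurable fun t : ℝ => (t / (t ^ 2 + y ^ 2)) • ψ t := by fun_prop
      exact this.aestronglyMeasurable
    · refine Eventually.of_forall fun y => Eventually.of_forall fun t => ?_
      have hb : 0 ≤ 2 * C * (f t + f (-t)) := by
        have := hfnn t
        have := hfnn (-t)
        positivity
      by_cases ht : t = 0
      · simpa [ht] using hb
      by_cases htR : R < |t|
      · simpa [hψ0 t htR] using hb
      have h0 : 0 < |t| := abs_pos.mpr ht
      rw [norm_smul, Real.norm_eq_abs]
      calc |t / (t ^ 2 + y ^ 2)| * ‖ψ t‖ ≤ |t|⁻¹ * (2 * C * |t| ^ α) :=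
            mul_le_mul (hk y t ht) (hψb t) (norm_nonneg _) (by positivity)
        _ = 2 * C * |t| ^ (α - 1) := by
            rw [Real.rpow_sub_one h0.ne']; ring
        _ ≤ _ := mul_le_mul_of_nonneg_left (hsum t ht (not_lt.mp htR)) (by positivity)
    · exact (hfi.add hfi.comp_neg).const_mul _
    · refine Eventually.of_forall fun t => ?_
      by_cases ht : t = 0
      · simp [ht]
      have hc : ContinuousAt (fun y : ℝ => (t / (t ^ 2 + y ^ 2)) • ψ t) 0 := by
        have hd : ContinuousAt (fun y : ℝ => t / (t ^ 2 + y ^ 2)) 0 := by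
          have h1 : ContinuousAt (fun y : ℝ => t ^ 2 + y ^ 2) 0 := by fun_prop
          have h2 : t ^ 2 + (0 : ℝ) ^ 2 ≠ 0 := by positivity
          exact continuousAt_const.div h1 h2
        exact hd.smul continuousAt_const
      exact hc.tendsto.mono_left nhdsWithin_le_nhds
  refine ⟨(1 / 2 : ℝ) • ∫ t : ℝ, (t / (t ^ 2 + 0 ^ 2)) • ψ t, (hlim.const_smul (1 / 2 : ℝ)).congr' ?_⟩
  filter_upwards [self_mem_nhdsWithin] with y hy
  have hy : 0 < y := hy
  set g : ℝ → ℂ := fun t => (t / (t ^ 2 + y ^ 2)) • φ (lam + t) with hg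
  have hgm : Measurable g := by fun_prop
  have hgi : Integrable g := by
    have hI : IntegrableOn g (Set.Icc (-R) R) := by
      refine Measure.integrableOn_of_bounded (M := R / y ^ 2 * M) (by simp)
        hgm.aestronglyMeasurable ?_
      refine (ae_restrict_mem measurableSet_Icc).mono fun t ht => ?_
      rw [hg, norm_smul, Real.norm_eq_abs]
      refine mul_le_mul ?_ (hM _) (norm_nonneg _) (by positivity)
      rw [abs_div, abs_of_pos (by positivity : 0 < t ^ 2 + y ^ 2)]
      exact div_le_div₀ hR0.le (abs_le.mpr ht) (by positivity) (by nlinarith [sq_nonneg t])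
    refine (integrableOn_iff_integrable_of_support_subset ?_).mp hI
    intro t ht
    by_contra hn
    have : R < |t| := by
      by_contra h
      exact hn (abs_le.mp (not_lt.mp h))
    exact ht (by simp [hg, hR t this])
  have e1 : ∫ x : ℝ, ((x - lam) / ((x - lam) ^ 2 + y ^ 2)) • φ x = ∫ t, g t := by
    rw [← integral_sub_right_eq_self g lam]
    simp [hg]
  have e2 : (fun t : ℝ => (t / (t ^ 2 + y ^ 2)) • ψ t) = fun t => g t + g (-t) := by
    funext t
    simp only [hg, hψ, smul_add, smul_neg, neg_sq, neg_div, neg_smul, sub_eq_add_neg]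
  rw [e1, e2, integral_add hgi hgi.comp_neg, integral_neg_eq_self g, ← two_smul ℝ, smul_smul]
  norm_num
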